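/- arXiv:1911.13095 — 2 statements merged into one kernel-verified Lean document; each statement's English description precedes it below -/
import Mathlib

section
/- For every positive integer d there exists a constant α_d > 0 such that for all a ∈ [0, 2C_ζ] and all y ∈ ℝ^d, ∫_{ℝ^d} max(a, |y − z|) ζ(z) dz − ∫_{ℝ^d} |z| ζ(z) dz ≥ α_d·min(a^{d+1}, a) + α_d·min(|y|^{d+1}, |y|), where C_ζ := ∫_{ℝ^d} |z| ζ(z) dz = √2 · Γ(d/2 + 1/2)/Γ(d/2). -/
/-!
Let `γ` be the standard Gaussian measure. By the triangle inequality,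
`2 max(a, |y|, |z|) ≤ max(a, |y - z|) + max(a, |y + z|)`; integrating in `z` and using the symmetry
of `γ` gives `∫ max(a, |y - z|) dγ ≥ ∫ max(m, |z|) dγ` with `m = max(a, |y|)`. Moreover
`max(m, |z|) - |z| ≥ m / 2` for `|z| ≤ m / 2`, so Markov's inequality yields
`∫ max(m, |z|) dγ - ∫ |z| dγ ≥ (m / 2) γ(|z| ≤ m / 2)`. The density of `γ` is bounded below near the
origin, so the last quantity is at least a constant times `m min(m, 1)^d = min(m^(d+1), m)`.
-/

open MeasureTheory Filter Set Real Topology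
open scoped NNReal ENNReal

noncomputable section

/-- Euclidean space `ℝ^d`. -/
abbrev EucSp (d : ℕ) := EuclideanSpace ℝ (Fin d)

/-- Standard Gaussian density `ζ(z) = (2π)^{−d/2} e^{−|z|²/2}` on `ℝ^d`. -/
def gauss (d : ℕ) (z : EucSp d) : ℝ := (2 * π) ^ (-(d:ℝ)/2) * Real.exp (-‖z‖^2/2)

/-- `C_ζ := ∫_{ℝ^d} |z| ζ(z) dz`. -/
def Cz (d : ℕ) : ℝ := ∫ z : EucSp d, ‖z‖ * gauss d z

open Metric Module ProbabilityTheory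

section MinPow

variable {a m : ℝ} (n : ℕ)

lemma min_pow_succ_self (hm : 0 ≤ m) : min (m ^ (n + 1)) m = m * min m 1 ^ n := by
  rcases le_total m 1 with hm_le | hm_ge
  · rw [min_eq_left hm_le, min_eq_left (pow_le_of_le_one hm hm_le n.succ_ne_zero), pow_succ']
  · rw [min_eq_right hm_ge, min_eq_right (le_self_pow₀ hm_ge n.succ_ne_zero), one_pow, mul_one]

lemma min_pow_succ_self_le_of_le (hm : 0 ≤ m) (ham : a ≤ m) :
    min (a ^ (n + 1)) a ≤ min (m ^ (n + 1)) m := by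
  rcases le_total 0 a with ha | ha
  · gcongr
  · exact (min_le_right _ _).trans (ha.trans (by positivity))

end MinPow

lemma two_mul_max_max_norm_le {E : Type*} [SeminormedAddCommGroup E] [NormedSpace ℝ E]
    (a : ℝ) (y z : E) :
    2 * max (max a ‖y‖) ‖z‖ ≤ max a ‖y - z‖ + max a ‖y + z‖ := by
  have norm_two_smul (x : E) : ‖(2 : ℝ) • x‖ = 2 * ‖x‖ := by
    rw [norm_smul, Real.norm_ofNat]
  have norm_left_le : 2 * ‖y‖ ≤ ‖y - z‖ + ‖y + z‖ := by
    rw [← norm_two_smul, show (2 : ℝ) • y = (y - z) + (y + z) by module]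
    exact norm_add_le _ _
  have norm_right_le : 2 * ‖z‖ ≤ ‖y - z‖ + ‖y + z‖ := by
    rw [← norm_two_smul, show (2 : ℝ) • z = (y + z) - (y - z) by module, add_comm ‖y - z‖]
    exact norm_sub_le _ _
  grind

section FirstMoment

variable {E : Type*} [NormedAddCommGroup E] [MeasurableSpace E]
  {ν : Measure E} [IsFiniteMeasure ν]

lemma integrable_max_const_norm_sub [OpensMeasurableSpace E]
    (hν : Integrable (fun z => ‖z‖) ν) (a : ℝ) (y : E) :
    Integrable (fun z => max a ‖y - z‖) ν := by
  have norm_sub_integrable : Integrable (fun z => ‖y - z‖) ν := by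
    refine ((integrable_const ‖y‖).add hν).mono'
      (Continuous.aestronglyMeasurable (by fun_prop)) (.of_forall fun z => ?_)
    rw [norm_norm]
    exact norm_sub_le y z
  exact (integrable_const a).sup norm_sub_integrable

lemma half_mul_measureReal_closedBall_le_integral_max_sub_integral_norm
    (hν : Integrable (fun z => ‖z‖) ν) {m : ℝ} (hm : 0 ≤ m) :
    m / 2 * ν.real (closedBall 0 (m / 2)) ≤ ∫ z, max m ‖z‖ ∂ν - ∫ z, ‖z‖ ∂ν := by
  have max_integrable : Integrable (fun z => max m ‖z‖) ν := (integrable_const m).sup hν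
  have closedBall_subset : closedBall (0 : E) (m / 2) ⊆ {z | m / 2 ≤ max m ‖z‖ - ‖z‖} := by
    intro z hz
    rw [mem_closedBall_zero_iff] at hz
    rw [mem_ofPred_eq]
    linarith [le_max_left m ‖z‖]
  calc m / 2 * ν.real (closedBall 0 (m / 2))
    _ ≤ m / 2 * ν.real {z | m / 2 ≤ max m ‖z‖ - ‖z‖} := by gcongr; finiteness
    _ ≤ ∫ z, (max m ‖z‖ - ‖z‖) ∂ν :=
      mul_meas_ge_le_integral_of_nonneg
        (.of_forall fun z => sub_nonneg.2 (le_max_right _ _)) (max_integrable.sub hν) _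
    _ = ∫ z, max m ‖z‖ ∂ν - ∫ z, ‖z‖ ∂ν := integral_sub max_integrable hν

lemma mul_min_pow_succ_le_integral_max_sub_integral_norm (hν : Integrable (fun z => ‖z‖) ν)
    {n : ℕ} {c m : ℝ} (hc : 0 ≤ c)
    (hball : ∀ r, 0 ≤ r → c * min r 1 ^ n ≤ ν.real (closedBall 0 r)) (hm : 0 ≤ m) :
    c / 2 ^ (n + 1) * min (m ^ (n + 1)) m ≤ ∫ z, max m ‖z‖ ∂ν - ∫ z, ‖z‖ ∂ν := by
  have half_min_le : min m 1 / 2 ≤ min (m / 2) 1 := by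
    rw [← min_div_div_right zero_le_two m 1]
    gcongr
    norm_num
  calc c / 2 ^ (n + 1) * min (m ^ (n + 1)) m
    _ = m / 2 * (c * (min m 1 / 2) ^ n) := by
      rw [min_pow_succ_self n hm, div_pow]
      field
    _ ≤ m / 2 * (c * min (m / 2) 1 ^ n) := by gcongr
    _ ≤ m / 2 * ν.real (closedBall 0 (m / 2)) := by
      gcongr
      exact hball _ (by positivity)
    _ ≤ ∫ z, max m ‖z‖ ∂ν - ∫ z, ‖z‖ ∂ν :=
      half_mul_measureReal_closedBall_le_integral_max_sub_integral_norm hν hm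

end FirstMoment

section Symmetrization

variable {E : Type*} [NormedAddCommGroup E] [NormedSpace ℝ E] [MeasurableSpace E] [BorelSpace E]
  {ν : Measure E} [IsFiniteMeasure ν] [ν.IsNegInvariant]

lemma integral_max_max_norm_le_integral_max_norm_sub
    (hν : Integrable (fun z => ‖z‖) ν) (a : ℝ) (y : E) :
    ∫ z, max (max a ‖y‖) ‖z‖ ∂ν ≤ ∫ z, max a ‖y - z‖ ∂ν := by
  have reflect : ∫ z, max a ‖y + z‖ ∂ν = ∫ z, max a ‖y - z‖ ∂ν := by
    simpa only [sub_neg_eq_add] using integral_neg_eq_self (fun z => max a ‖y - z‖) ν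
  have sub_integrable := integrable_max_const_norm_sub hν a y
  have add_integrable : Integrable (fun z => max a ‖y + z‖) ν := by
    simpa only [sub_neg_eq_add] using sub_integrable.comp_neg
  have : 2 * ∫ z, max (max a ‖y‖) ‖z‖ ∂ν ≤ 2 * ∫ z, max a ‖y - z‖ ∂ν :=
    calc 2 * ∫ z, max (max a ‖y‖) ‖z‖ ∂ν
      _ = ∫ z, 2 * max (max a ‖y‖) ‖z‖ ∂ν := (integral_const_mul _ _).symm
      _ ≤ ∫ z, (max a ‖y - z‖ + max a ‖y + z‖) ∂ν :=
        integral_mono (((integrable_const _).sup hν).const_mul 2)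
          (sub_integrable.add add_integrable) (two_mul_max_max_norm_le a y)
      _ = 2 * ∫ z, max a ‖y - z‖ ∂ν := by
        rw [integral_add sub_integrable add_integrable, reflect, two_mul]
  linarith

theorem exists_mul_min_pow_add_le_integral_max_sub_integral_norm (hν : Integrable (fun z => ‖z‖) ν)
    {n : ℕ} {c : ℝ} (hc : 0 < c)
    (hball : ∀ r, 0 ≤ r → c * min r 1 ^ n ≤ ν.real (closedBall 0 r)) :
    ∃ α > 0, ∀ (a : ℝ) (y : E),
      α * min (a ^ (n + 1)) a + α * min (‖y‖ ^ (n + 1)) ‖y‖ ≤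
        ∫ z, max a ‖y - z‖ ∂ν - ∫ z, ‖z‖ ∂ν := by
  refine ⟨c / 2 ^ (n + 1) / 2, by positivity, fun a y => ?_⟩
  set m := max a ‖y‖
  have hm : 0 ≤ m := le_max_of_le_right (norm_nonneg y)
  have ha := min_pow_succ_self_le_of_le n hm (le_max_left a ‖y‖)
  have hy := min_pow_succ_self_le_of_le n hm (le_max_right a ‖y‖)
  calc c / 2 ^ (n + 1) / 2 * min (a ^ (n + 1)) a
        + c / 2 ^ (n + 1) / 2 * min (‖y‖ ^ (n + 1)) ‖y‖
    _ ≤ c / 2 ^ (n + 1) / 2 * min (m ^ (n + 1)) m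
        + c / 2 ^ (n + 1) / 2 * min (m ^ (n + 1)) m := by gcongr
    _ = c / 2 ^ (n + 1) * min (m ^ (n + 1)) m := by ring
    _ ≤ ∫ z, max m ‖z‖ ∂ν - ∫ z, ‖z‖ ∂ν :=
      mul_min_pow_succ_le_integral_max_sub_integral_norm hν hc.le hball hm
    _ ≤ ∫ z, max a ‖y - z‖ ∂ν - ∫ z, ‖z‖ ∂ν :=
      sub_le_sub_right (integral_max_max_norm_le_integral_max_norm_sub hν a y) _

end Symmetrization

lemma mul_min_pow_finrank_le_withDensity_real_closedBall {E : Type*} [NormedAddCommGroup E]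
    [NormedSpace ℝ E] [FiniteDimensional ℝ E] [MeasurableSpace E] [BorelSpace E]
    (μ : Measure E) [μ.IsAddHaarMeasure] {f : E → ℝ≥0∞} [IsFiniteMeasure (μ.withDensity f)]
    {K : ℝ} (hK : 0 ≤ K) (hf : ∀ z ∈ closedBall 0 1, ENNReal.ofReal K ≤ f z)
    {r : ℝ} (hr : 0 ≤ r) :
    K * μ.real (closedBall 0 1) * min r 1 ^ finrank ℝ E ≤
      (μ.withDensity f).real (closedBall 0 r) := by
  have hr' : 0 ≤ min r 1 := le_min hr zero_le_one
  have const_mul_le : ENNReal.ofReal K * μ (closedBall 0 (min r 1)) ≤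
      μ.withDensity f (closedBall 0 (min r 1)) := by
    rw [withDensity_apply _ measurableSet_closedBall, ← setLIntegral_const]
    exact setLIntegral_mono' measurableSet_closedBall fun z hz =>
      hf z (closedBall_subset_closedBall (min_le_right r 1) hz)
  calc K * μ.real (closedBall 0 1) * min r 1 ^ finrank ℝ E
    _ = K * μ.real (closedBall 0 (min r 1)) := by
      rw [Measure.addHaar_real_closedBall' μ 0 hr', mul_assoc, mul_comm (μ.real _)]
    _ = (ENNReal.ofReal K * μ (closedBall 0 (min r 1))).toReal := by
      rw [ENNReal.toReal_mul, ENNReal.toReal_ofReal hK, measureReal_def]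
    _ ≤ (μ.withDensity f).real (closedBall 0 (min r 1)) :=
      ENNReal.toReal_mono (by finiteness) const_mul_le
    _ ≤ (μ.withDensity f).real (closedBall 0 r) :=
      measureReal_mono (closedBall_subset_closedBall (min_le_left r 1))

section StdGaussian

variable {E : Type*} [NormedAddCommGroup E] [InnerProductSpace ℝ E] [FiniteDimensional ℝ E]
  [MeasurableSpace E] [BorelSpace E]

variable (E) in
instance stdGaussian_isNegInvariant : (stdGaussian E).IsNegInvariant :=
  ⟨stdGaussian_map (LinearIsometryEquiv.neg ℝ)⟩

lemma integrable_exp_neg_mul_sq_norm {b : ℝ} (hb : 0 < b) :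
    Integrable fun z : E => exp (-b * ‖z‖ ^ 2) :=
  .of_integral_ne_zero <| by
    rw [GaussianFourier.integral_rexp_neg_mul_sq_norm hb]
    positivity

lemma integral_exp_neg_sq_norm_div_two_smul_cexp_inner (t : E) :
    ∫ z : E, exp (-‖z‖ ^ 2 / 2) • Complex.exp (inner ℝ z t * Complex.I) =
      ((2 * π) ^ ((finrank ℝ E : ℝ) / 2) : ℝ) * Complex.exp (-‖t‖ ^ 2 / 2) := by
  have integrand_eq (z : E) : exp (-‖z‖ ^ 2 / 2) • Complex.exp (inner ℝ z t * Complex.I) =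
      Complex.exp (-(1 / 2 : ℂ) * ‖z‖ ^ 2 + Complex.I * inner ℝ t z) := by
    rw [Complex.real_smul, Complex.ofReal_exp, ← Complex.exp_add, real_inner_comm]
    push_cast
    congr 1
    ring
  simp only [integrand_eq]
  rw [GaussianFourier.integral_cexp_neg_mul_sq_norm_add (by norm_num),
    Complex.ofReal_cpow two_pi_pos.le, Complex.I_sq]
  push_cast
  congr 2 <;> ring

variable (E) in
theorem stdGaussian_eq_withDensity :
    stdGaussian E = volume.withDensity fun z =>
      ENNReal.ofReal ((2 * π) ^ (-(finrank ℝ E : ℝ) / 2) * exp (-‖z‖ ^ 2 / 2)) := by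
  set C : ℝ := (2 * π) ^ (-(finrank ℝ E : ℝ) / 2) with hC_def
  have hC : C * (2 * π) ^ ((finrank ℝ E : ℝ) / 2) = 1 := by
    rw [hC_def, neg_div, rpow_neg two_pi_pos.le, inv_mul_cancel₀ (by positivity)]
  have density_integrable : Integrable fun z : E => C * exp (-‖z‖ ^ 2 / 2) := by
    simpa only [neg_mul, neg_div, div_eq_inv_mul, mul_neg, mul_one] using
      (integrable_exp_neg_mul_sq_norm (E := E) one_half_pos).const_mul C
  have := isFiniteMeasure_withDensity_ofReal density_integrable.2
  refine Measure.ext_of_charFun (funext fun t => ?_)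
  have toReal_density (z : E) :
      (ENNReal.ofReal (C * exp (-‖z‖ ^ 2 / 2))).toReal = C * exp (-‖z‖ ^ 2 / 2) :=
    ENNReal.toReal_ofReal (by positivity)
  rw [charFun_stdGaussian, charFun_apply, integral_withDensity_eq_integral_toReal_smul
    (by fun_prop) (.of_forall fun _ => ENNReal.ofReal_lt_top)]
  simp only [toReal_density, mul_smul]
  rw [integral_smul, integral_exp_neg_sq_norm_div_two_smul_cexp_inner, Complex.real_smul,
    ← mul_assoc, ← Complex.ofReal_mul, hC, Complex.ofReal_one, one_mul]

variable (E) in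
theorem exists_mul_min_pow_finrank_le_stdGaussian_real_closedBall :
    ∃ c > 0, ∀ r, 0 ≤ r →
      c * min r 1 ^ finrank ℝ E ≤ (stdGaussian E).real (closedBall 0 r) := by
  have hV : 0 < volume.real (closedBall (0 : E) 1) :=
    ENNReal.toReal_pos (measure_closedBall_pos _ _ one_pos).ne' measure_closedBall_lt_top.ne
  refine ⟨(2 * π) ^ (-(finrank ℝ E : ℝ) / 2) * exp (-1 / 2) * volume.real (closedBall (0 : E) 1),
    by positivity, fun r hr => ?_⟩
  have isFiniteMeasure_stdGaussian : IsFiniteMeasure (stdGaussian E) := inferInstance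
  rw [stdGaussian_eq_withDensity] at isFiniteMeasure_stdGaussian ⊢
  refine mul_min_pow_finrank_le_withDensity_real_closedBall volume (by positivity)
    (fun z hz => ENNReal.ofReal_le_ofReal ?_) hr
  rw [mem_closedBall_zero_iff] at hz
  gcongr
  exact pow_le_one₀ (norm_nonneg z) hz

lemma finrank_mul_volume_real_unit_ball [Nontrivial E] :
    finrank ℝ E * volume.real (ball (0 : E) 1) =
      2 * (π ^ ((finrank ℝ E : ℝ) / 2) / Gamma ((finrank ℝ E : ℝ) / 2)) := by
  have hn : (0 : ℝ) < finrank ℝ E := mod_cast finrank_pos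
  have sqrt_pi_pow : √π ^ finrank ℝ E = π ^ ((finrank ℝ E : ℝ) / 2) := by
    rw [sqrt_eq_rpow, ← rpow_mul_natCast pi_nonneg, one_div_mul_eq_div]
  rw [measureReal_def, InnerProductSpace.volume_ball, ENNReal.ofReal_one, one_pow, one_mul,
    ENNReal.toReal_ofReal (by positivity), Gamma_add_one (by positivity), sqrt_pi_pow]
  field

theorem integral_norm_rpow_mul_exp_neg_mul_sq_norm [Nontrivial E] {s b : ℝ}
    (hs : -(finrank ℝ E : ℝ) < s) (hb : 0 < b) :
    ∫ z : E, ‖z‖ ^ s * exp (-b * ‖z‖ ^ 2) =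
      π ^ ((finrank ℝ E : ℝ) / 2) * b ^ (-(finrank ℝ E + s) / 2) *
        (Gamma ((finrank ℝ E + s) / 2) / Gamma ((finrank ℝ E : ℝ) / 2)) := by
  set n := finrank ℝ E
  have hn : 0 < n := finrank_pos
  have radial_integral :
      ∫ r in Ioi (0 : ℝ), r ^ (n - 1) • (r ^ s * exp (-b * r ^ 2)) =
        b ^ (-(n + s) / 2) * (1 / 2) * Gamma ((n + s) / 2) := by
    have gamma_integral :=
      integral_rpow_mul_exp_neg_mul_rpow (q := n + s - 1) two_pos (by linarith) hb
    rw [sub_add_cancel] at gamma_integral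
    rw [← gamma_integral]
    refine setIntegral_congr_fun measurableSet_Ioi fun r hr => ?_
    rw [mem_Ioi] at hr
    rw [smul_eq_mul, ← mul_assoc, rpow_two, ← rpow_natCast, ← rpow_add hr, Nat.cast_pred hn]
    congr 2
    ring
  rw [integral_fun_norm_addHaar volume fun r => r ^ s * exp (-b * r ^ 2), nsmul_eq_mul,
    smul_eq_mul, ← mul_assoc, finrank_mul_volume_real_unit_ball, radial_integral]
  ring

end StdGaussian

section Gauss

variable (d : ℕ)

lemma stdGaussian_eucSp_eq_withDensity_gauss :
    stdGaussian (EucSp d) = volume.withDensity fun z => ENNReal.ofReal (gauss d z) := by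
  simpa only [gauss, finrank_euclideanSpace_fin] using stdGaussian_eq_withDensity (EucSp d)

lemma integral_mul_gauss (f : EucSp d → ℝ) :
    ∫ z, f z * gauss d z = ∫ z, f z ∂stdGaussian (EucSp d) := by
  have gauss_nonneg (z : EucSp d) : 0 ≤ gauss d z := by unfold gauss; positivity
  have gauss_measurable : Measurable (gauss d) := by unfold gauss; fun_prop
  rw [stdGaussian_eucSp_eq_withDensity_gauss, integral_withDensity_eq_integral_toReal_smul
    gauss_measurable.ennreal_ofReal (.of_forall fun _ => ENNReal.ofReal_lt_top)]
  simp only [ENNReal.toReal_ofReal (gauss_nonneg _), smul_eq_mul, mul_comm]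

theorem Cz_eq_sqrt_two_mul_Gamma_div_Gamma (hd : 0 < d) :
    Cz d = √2 * (Gamma ((d : ℝ) / 2 + 1 / 2) / Gamma ((d : ℝ) / 2)) := by
  have : Nonempty (Fin d) := ⟨⟨0, hd⟩⟩
  have norm_mul_gauss (z : EucSp d) : ‖z‖ * gauss d z =
      (2 * π) ^ (-(d : ℝ) / 2) * (‖z‖ ^ (1 : ℝ) * exp (-(1 / 2) * ‖z‖ ^ 2)) := by
    rw [gauss, rpow_one, mul_left_comm]
    congr 3
    ring
  have const_eq :
      (2 * π) ^ (-(d : ℝ) / 2) * (π ^ ((d : ℝ) / 2) * (1 / 2) ^ (-((d : ℝ) + 1) / 2)) = √2 := by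
    rw [neg_div, rpow_neg two_pi_pos.le, mul_rpow two_pos.le pi_nonneg, neg_div, one_div (2 : ℝ),
      rpow_neg_eq_inv_rpow, inv_inv, add_div, rpow_add two_pos, ← sqrt_eq_rpow]
    field
  simp only [Cz, norm_mul_gauss]
  rw [integral_const_mul, integral_norm_rpow_mul_exp_neg_mul_sq_norm (by linarith) one_half_pos,
    finrank_euclideanSpace_fin, ← mul_assoc, const_eq, add_div]

end Gauss

theorem gauss_max_lower_bound_general (d : ℕ) (hd : 0 < d) :
    Cz d = √2 * (Gamma ((d : ℝ) / 2 + 1 / 2) / Gamma ((d : ℝ) / 2)) ∧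
    ∃ α > 0, ∀ (a : ℝ) (y : EucSp d),
      α * min (a ^ (d + 1)) a + α * min (‖y‖ ^ (d + 1)) ‖y‖ ≤
        (∫ z : EucSp d, max a ‖y - z‖ * gauss d z) - Cz d := by
  refine ⟨Cz_eq_sqrt_two_mul_Gamma_div_Gamma d hd, ?_⟩
  obtain ⟨c, hc, hball⟩ := exists_mul_min_pow_finrank_le_stdGaussian_real_closedBall (EucSp d)
  rw [finrank_euclideanSpace_fin] at hball
  simp only [Cz, integral_mul_gauss]
  exact exists_mul_min_pow_add_le_integral_max_sub_integral_norm
    IsGaussian.integrable_id.norm hc hball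

/-- For every `d ≥ 1` there is `α_d > 0` with
`∫ max(a,|y−z|) ζ(z) dz − ∫ |z| ζ(z) dz ≥ α_d min(a^{d+1},a) + α_d min(|y|^{d+1},|y|)`
for all `a ∈ [0, 2C_ζ]` and `y ∈ ℝ^d`, where
`C_ζ = ∫ |z| ζ(z) dz = √2 Γ(d/2+1/2)/Γ(d/2)`. -/
theorem gauss_max_lower_bound (d : ℕ) (hd : 0 < d) :
    Cz d = Real.sqrt 2 * (Real.Gamma ((d:ℝ)/2 + 1/2) / Real.Gamma ((d:ℝ)/2)) ∧
    ∃ α > 0, ∀ a ∈ Set.Icc (0:ℝ) (2 * Cz d), ∀ y : EucSp d,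
      α * min (a ^ (d + 1)) a + α * min (‖y‖ ^ (d + 1)) ‖y‖ ≤
        (∫ z : EucSp d, max a ‖y - z‖ * gauss d z) - Cz d :=
  (gauss_max_lower_bound_general d hd).imp_right fun ⟨α, hα, hle⟩ => ⟨α, hα, fun a _ => hle a⟩

end
end

section
/- Define F_d:[0,∞)→ℝ by F_d(a) := ∫_{ℝ^d} max(a, |z|) ζ(z) dz − ∫_{ℝ^d} |z| ζ(z) dz. Then F_d is infinitely differentiable on [0,∞) (one-sided at 0), with F_d'(a) = ∫_{|z| ≤ a} ζ(z) dz and F_d''(a) = (2^{1−d/2}/Γ(d/2))·a^{d−1}·e^{−a²/2} for all a ≥ 0; moreover F_d'(0) = F_d''(0) = ⋯ = F_d^{(d)}(0) = 0 and F_d^{(d+1)}(0) > 0. -/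
open MeasureTheory Filter Set Real Topology
open scoped NNReal ENNReal

noncomputable section

/-!
Write `max a |z| = |z| + ∫_0^a 1_{|z| ≤ s} ds`. By Fubini, `F_d` is the primitive, vanishing at `0`,
of the Gaussian mass `P(|Z| ≤ s)`, and polar coordinates exhibit that mass as the primitive of the
chi density `c y^{d-1} e^{-y²/2}`, `c = 2^{1-d/2} / Γ(d/2)`. So `F_d` agrees on `[0, ∞)` with a
double primitive of a function that is smooth on `ℝ` and vanishes to order exactly `d - 1` at `0`.
-/

section Calculus

theorem iteratedDeriv_pow_mul_zero {𝕜 : Type*} [NontriviallyNormedField 𝕜] {φ : 𝕜 → 𝕜} {k : ℕ}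
    (hφ : ContDiffAt 𝕜 k φ 0) (n : ℕ) :
    iteratedDeriv k (fun x => x ^ n * φ x) 0 =
      k.descFactorial n * iteratedDeriv (k - n) φ 0 := by
  have leibniz := iteratedDeriv_fun_mul (contDiff_id.pow n).contDiffAt hφ
  simp only [id_eq, iteratedDeriv_fun_pow_zero, Nat.cast_ite, Nat.cast_zero, mul_ite, ite_mul,
    mul_zero, zero_mul, Finset.sum_ite_eq', Finset.mem_range] at leibniz
  rw [leibniz, Nat.descFactorial_eq_factorial_mul_choose]
  split_ifs with hnk
  · push_cast
    ring
  · simp [Nat.choose_eq_zero_of_lt (show k < n by lia)]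

theorem iteratedDerivWithin_eq_iteratedDeriv_of_eqOn {𝕜 F : Type*} [NontriviallyNormedField 𝕜]
    [NormedAddCommGroup F] [NormedSpace 𝕜 F] {f g : 𝕜 → F} {s : Set 𝕜} {x : 𝕜} {n : ℕ}
    (hfg : EqOn f g s) (hs : UniqueDiffOn 𝕜 s) (hg : ContDiffAt 𝕜 n g x) (hx : x ∈ s) :
    iteratedDerivWithin n f s x = iteratedDeriv n g x :=
  (iteratedDerivWithin_congr hfg hx).trans (iteratedDerivWithin_eq_iteratedDeriv hs hg hx)

variable {E : Type*} [NormedAddCommGroup E] [NormedSpace ℝ E] [CompleteSpace E] {f : ℝ → E}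

theorem contDiff_succ_intervalIntegral {n : ℕ∞} (hf : ContDiff ℝ n f) (a : ℝ) :
    ContDiff ℝ (n + 1) (fun u => ∫ x in a..u, f x) := by
  have hderiv := hf.continuous.integral_hasStrictDerivAt a
  refine contDiff_succ_iff_deriv.2 ⟨fun u => (hderiv u).hasDerivAt.differentiableAt, by simp, ?_⟩
  rwa [funext (hf.continuous.deriv_integral f a)]

theorem iteratedDeriv_succ_intervalIntegral (hf : Continuous f) (a : ℝ) (k : ℕ) :
    iteratedDeriv (k + 1) (fun u => ∫ x in a..u, f x) = iteratedDeriv k f := by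
  rw [iteratedDeriv_succ', funext (hf.deriv_integral f a)]

end Calculus

section LayerCake

theorem max_eq_add_intervalIntegral_indicator_Ici {a x : ℝ} (ha : 0 ≤ a) (hx : 0 ≤ x) :
    max a x = x + ∫ s in (0 : ℝ)..a, (Ici x).indicator 1 s := by
  have hset : (Ioc 0 a ∩ Ici x : Set ℝ) =ᵐ[volume] Ioc x a := by
    simpa only [Ioc_inter_Ioi, max_eq_right hx] using
      (ae_eq_refl (Ioc 0 a)).inter (Ioi_ae_eq_Ici (a := x)).symm
  rw [intervalIntegral.integral_of_le ha, setIntegral_indicator measurableSet_Ici,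
    setIntegral_congr_set hset]
  simp [Real.volume_real_Ioc, ← max_add_add_left]

variable {α : Type*} [MeasurableSpace α] {μ : Measure α} [SFinite μ] {f g : α → ℝ}

theorem integrable_indicator_setOf_le_prod (hf : Measurable f) (hg : Integrable g μ)
    (ν : Measure ℝ) [IsFiniteMeasure ν] :
    Integrable (Function.uncurry fun s x => {x | f x ≤ s}.indicator g x) (ν.prod μ) :=
  (hg.comp_snd ν).indicator (measurableSet_le (hf.comp measurable_snd) measurable_fst)

theorem integral_max_mul_sub_integral_mul (hf : Measurable f) (hf₀ : 0 ≤ f)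
    (hg : Integrable g μ) (hfg : Integrable (fun x => f x * g x) μ) {a : ℝ} (ha : 0 ≤ a) :
    ∫ x, max a (f x) * g x ∂μ - ∫ x, f x * g x ∂μ =
      ∫ s in (0 : ℝ)..a, ∫ x in {x | f x ≤ s}, g x ∂μ := by
  have hprod := integrable_indicator_setOf_le_prod hf hg (volume.restrict (Ioc 0 a))
  have hmax (x : α) :
      max a (f x) * g x = f x * g x + ∫ s in (0 : ℝ)..a, {x | f x ≤ s}.indicator g x := by
    rw [max_eq_add_intervalIntegral_indicator_Ici ha (hf₀ x), add_mul,
      ← intervalIntegral.integral_mul_const]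
    simp [indicator_apply]
  have hint : Integrable (fun x => ∫ s in (0 : ℝ)..a, {x | f x ≤ s}.indicator g x) μ := by
    simpa only [intervalIntegral.integral_of_le ha] using! hprod.integral_prod_right
  simp_rw [hmax]
  rw [integral_add hfg hint, add_sub_cancel_left,
    ← intervalIntegral_integral_swap (by rwa [uIoc_of_le ha])]
  simp_rw [integral_indicator (measurableSet_le hf measurable_const)]

end LayerCake

section Polar

variable {E : Type*} [NormedAddCommGroup E] [NormedSpace ℝ E] [FiniteDimensional ℝ E]
  [Nontrivial E] [MeasurableSpace E] [BorelSpace E] (μ : Measure E) [μ.IsAddHaarMeasure]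

theorem setIntegral_norm_le_fun_norm_addHaar {F : Type*} [NormedAddCommGroup F] [NormedSpace ℝ F]
    (f : ℝ → F) {a : ℝ} (ha : 0 ≤ a) :
    ∫ x in {x : E | ‖x‖ ≤ a}, f ‖x‖ ∂μ = Module.finrank ℝ E • μ.real (Metric.ball 0 1) •
      ∫ y in (0 : ℝ)..a, y ^ (Module.finrank ℝ E - 1) • f y := by
  calc ∫ x in {x : E | ‖x‖ ≤ a}, f ‖x‖ ∂μ
    _ = ∫ x, (Iic a).indicator f ‖x‖ ∂μ :=
      (integral_indicator (measurableSet_le measurable_norm measurable_const)).symm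
    _ = Module.finrank ℝ E • μ.real (Metric.ball 0 1) • ∫ y in Ioi (0 : ℝ),
          (Iic a).indicator (fun y => y ^ (Module.finrank ℝ E - 1) • f y) y := by
      simp_rw [integral_fun_norm_addHaar μ, indicator_smul]
    _ = _ := by
      rw [setIntegral_indicator measurableSet_Iic, Ioi_inter_Iic,
        intervalIntegral.integral_of_le ha]

theorem integrable_norm_pow_mul_exp_neg_mul_sq_norm {b : ℝ} (hb : 0 < b) (n : ℕ) :
    Integrable (fun x : E => ‖x‖ ^ n * exp (-b * ‖x‖ ^ 2)) μ := by
  refine (integrable_fun_norm_addHaar μ (f := fun y => y ^ n * exp (-b * y ^ 2))).2 ?_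
  have hs : (-1 : ℝ) < (Module.finrank ℝ E - 1 + n : ℕ) :=
    neg_one_lt_zero.trans_le (Nat.cast_nonneg _)
  simpa only [smul_eq_mul, ← mul_assoc, ← pow_add, rpow_natCast] using
    integrableOn_rpow_mul_exp_neg_mul_sq hb hs

end Polar

section Chi

/-- The chi density with `d` degrees of freedom, i.e. the density of `|Z|` for a standard Gaussian
vector `Z` in `ℝ^d`. It is given by its formula on `[0, ∞)` for every real argument, so that it is
smooth on `ℝ`. -/
def chiDensity (d : ℕ) (y : ℝ) : ℝ :=
  (2 : ℝ) ^ (1 - (d : ℝ) / 2) / Gamma ((d : ℝ) / 2) * y ^ (d - 1) * exp (-y ^ 2 / 2)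

/-- The primitive of `chiDensity` vanishing at `0`; on `[0, ∞)` it is the distribution function of
the chi distribution with `d` degrees of freedom. -/
def chiCDF (d : ℕ) (a : ℝ) : ℝ := ∫ y in (0 : ℝ)..a, chiDensity d y

variable {d : ℕ}

theorem contDiff_chiDensity : ContDiff ℝ (⊤ : ℕ∞) (chiDensity d) := by
  unfold chiDensity
  fun_prop

theorem hasDerivAt_chiCDF (a : ℝ) : HasDerivAt (chiCDF d) (chiDensity d a) a :=
  (contDiff_chiDensity.continuous.integral_hasStrictDerivAt 0 a).hasDerivAt

theorem contDiff_chiCDF : ContDiff ℝ (⊤ : ℕ∞) (chiCDF d) :=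
  contDiff_succ_intervalIntegral contDiff_chiDensity 0

theorem contDiff_integral_chiCDF : ContDiff ℝ (⊤ : ℕ∞) (fun a => ∫ s in (0 : ℝ)..a, chiCDF d s) :=
  contDiff_succ_intervalIntegral contDiff_chiCDF 0

theorem hasDerivAt_integral_chiCDF (a : ℝ) :
    HasDerivAt (fun a => ∫ s in (0 : ℝ)..a, chiCDF d s) (chiCDF d a) a :=
  (contDiff_chiCDF.continuous.integral_hasStrictDerivAt 0 a).hasDerivAt

theorem iteratedDeriv_chiDensity_zero (k : ℕ) :
    iteratedDeriv k (chiDensity d) 0 = k.descFactorial (d - 1) * iteratedDeriv (k - (d - 1))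
      (fun y => (2 : ℝ) ^ (1 - (d : ℝ) / 2) / Gamma ((d : ℝ) / 2) * exp (-y ^ 2 / 2)) 0 := by
  rw [← iteratedDeriv_pow_mul_zero (by fun_prop)]
  congr 1
  ext y
  rw [chiDensity]
  ring

theorem iteratedDeriv_add_two_integral_chiCDF (k : ℕ) :
    iteratedDeriv (k + 2) (fun a => ∫ s in (0 : ℝ)..a, chiCDF d s) =
      iteratedDeriv k (chiDensity d) := by
  rw [iteratedDeriv_succ_intervalIntegral contDiff_chiCDF.continuous]
  exact iteratedDeriv_succ_intervalIntegral contDiff_chiDensity.continuous 0 k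

theorem iteratedDeriv_integral_chiCDF_zero_eq_zero {k : ℕ} (hk : k ≤ d) :
    iteratedDeriv k (fun a => ∫ s in (0 : ℝ)..a, chiCDF d s) 0 = 0 := by
  match k with
  | 0 => simp
  | 1 => rw [iteratedDeriv_one, (hasDerivAt_integral_chiCDF 0).deriv, chiCDF,
      intervalIntegral.integral_same]
  | k + 2 =>
    rw [iteratedDeriv_add_two_integral_chiCDF, iteratedDeriv_chiDensity_zero,
      Nat.descFactorial_eq_zero_iff_lt.2 (by lia), Nat.cast_zero, zero_mul]

theorem iteratedDeriv_succ_integral_chiCDF_zero_pos (hd : 0 < d) :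
    0 < iteratedDeriv (d + 1) (fun a => ∫ s in (0 : ℝ)..a, chiCDF d s) 0 := by
  have : 0 < Gamma ((d : ℝ) / 2) := Gamma_pos_of_pos (by positivity)
  rw [show d + 1 = d - 1 + 2 by lia, iteratedDeriv_add_two_integral_chiCDF,
    iteratedDeriv_chiDensity_zero, Nat.descFactorial_self, Nat.sub_self, iteratedDeriv_zero]
  positivity

end Chi

section Gauss

variable {d : ℕ}

theorem integrable_norm_pow_mul_gauss (hd : 0 < d) (n : ℕ) :
    Integrable (fun z : EucSp d => ‖z‖ ^ n * gauss d z) := by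
  have : Nonempty (Fin d) := Fin.pos_iff_nonempty.1 hd
  refine ((integrable_norm_pow_mul_exp_neg_mul_sq_norm volume one_half_pos n).const_mul
    ((2 * π) ^ (-(d : ℝ) / 2))).congr (.of_forall fun z => ?_)
  simp only [gauss]
  ring_nf

theorem mul_volume_real_ball_mul_two_pi_rpow (hd : 0 < d) :
    d * volume.real (Metric.ball (0 : EucSp d) 1) * (2 * π) ^ (-(d : ℝ) / 2) =
      (2 : ℝ) ^ (1 - (d : ℝ) / 2) / Gamma ((d : ℝ) / 2) := by
  have : Nonempty (Fin d) := Fin.pos_iff_nonempty.1 hd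
  have : 0 < Gamma ((d : ℝ) / 2) := Gamma_pos_of_pos (by positivity)
  have hball : volume.real (Metric.ball (0 : EucSp d) 1) =
      π ^ ((d : ℝ) / 2) / ((d : ℝ) / 2 * Gamma ((d : ℝ) / 2)) := by
    rw [measureReal_def, EuclideanSpace.volume_ball, Fintype.card_fin,
      Gamma_add_one (by positivity), ENNReal.ofReal_one, one_pow, one_mul,
      ENNReal.toReal_ofReal (by positivity), sqrt_eq_rpow, ← rpow_mul_natCast pi_pos.le,
      one_div_mul_eq_div]
  rw [hball, neg_div, rpow_neg (by positivity), mul_rpow zero_le_two pi_pos.le,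
    rpow_sub two_pos, rpow_one]
  field_simp

theorem setIntegral_norm_le_gauss (hd : 0 < d) {a : ℝ} (ha : 0 ≤ a) :
    ∫ z in {z : EucSp d | ‖z‖ ≤ a}, gauss d z = chiCDF d a := by
  have : Nonempty (Fin d) := Fin.pos_iff_nonempty.1 hd
  have polar := setIntegral_norm_le_fun_norm_addHaar (volume : Measure (EucSp d))
    (fun y => (2 * π) ^ (-(d : ℝ) / 2) * exp (-y ^ 2 / 2)) ha
  simp only [gauss, polar, finrank_euclideanSpace_fin, nsmul_eq_mul, smul_eq_mul, chiCDF,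
    chiDensity, ← mul_volume_real_ball_mul_two_pi_rpow hd, ← intervalIntegral.integral_const_mul]
  congr 1
  ext y
  ring

theorem integral_max_norm_mul_gauss_sub_Cz (hd : 0 < d) {a : ℝ} (ha : 0 ≤ a) :
    (∫ z : EucSp d, max a ‖z‖ * gauss d z) - Cz d = ∫ s in (0 : ℝ)..a, chiCDF d s := by
  have hg : Integrable (gauss d) := by simpa using integrable_norm_pow_mul_gauss hd 0
  have hng : Integrable (fun z => ‖z‖ * gauss d z) := by
    simpa using integrable_norm_pow_mul_gauss hd 1
  rw [Cz, integral_max_mul_sub_integral_mul measurable_norm norm_nonneg hg hng ha]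
  refine intervalIntegral.integral_congr fun s hs => setIntegral_norm_le_gauss hd ?_
  rw [uIcc_of_le ha] at hs
  exact hs.1

end Gauss

/-- The function `F_d(a) := ∫ max(a,|z|) ζ(z) dz − ∫ |z| ζ(z) dz` is
infinitely differentiable on `[0,∞)` (one-sided at `0`), with
`F_d'(a) = ∫_{|z|≤a} ζ(z) dz` and `F_d''(a) = (2^{1−d/2}/Γ(d/2)) a^{d−1} e^{−a²/2}`;
moreover `F_d'(0) = ⋯ = F_d^{(d)}(0) = 0` and `F_d^{(d+1)}(0) > 0`. -/
theorem Fd_derivatives (d : ℕ) (hd : 0 < d) :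
    ContDiffOn ℝ (⊤ : ℕ∞) (fun a : ℝ => (∫ z : EucSp d, max a ‖z‖ * gauss d z) - Cz d)
      (Set.Ici 0) ∧
    (∀ a : ℝ, 0 ≤ a →
      HasDerivWithinAt (fun a : ℝ => (∫ z : EucSp d, max a ‖z‖ * gauss d z) - Cz d)
        (∫ z in {z : EucSp d | ‖z‖ ≤ a}, gauss d z) (Set.Ici 0) a) ∧
    (∀ a : ℝ, 0 ≤ a →
      HasDerivWithinAt (fun a : ℝ => ∫ z in {z : EucSp d | ‖z‖ ≤ a}, gauss d z)
        ((2:ℝ) ^ (1 - (d:ℝ)/2) / Real.Gamma ((d:ℝ)/2) * a ^ (d - 1) *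
          Real.exp (-a^2/2)) (Set.Ici 0) a) ∧
    (∀ k : ℕ, 1 ≤ k → k ≤ d →
      iteratedDerivWithin k (fun a : ℝ => (∫ z : EucSp d, max a ‖z‖ * gauss d z) - Cz d)
        (Set.Ici 0) 0 = 0) ∧
    0 < iteratedDerivWithin (d + 1)
        (fun a : ℝ => (∫ z : EucSp d, max a ‖z‖ * gauss d z) - Cz d) (Set.Ici 0) 0 := by
  have hF : EqOn (fun a : ℝ => (∫ z : EucSp d, max a ‖z‖ * gauss d z) - Cz d)
      (fun a => ∫ s in (0 : ℝ)..a, chiCDF d s) (Ici 0) :=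
    fun _ ha => integral_max_norm_mul_gauss_sub_Cz hd ha
  have hG : EqOn (fun a : ℝ => ∫ z in {z : EucSp d | ‖z‖ ≤ a}, gauss d z) (chiCDF d) (Ici 0) :=
    fun _ ha => setIntegral_norm_le_gauss hd ha
  have hiter (k : ℕ) := iteratedDerivWithin_eq_iteratedDeriv_of_eqOn (n := k) hF
    (uniqueDiffOn_Ici 0) (contDiff_infty.1 contDiff_integral_chiCDF k).contDiffAt self_mem_Ici
  refine ⟨contDiff_integral_chiCDF.contDiffOn.congr hF, fun a ha => ?_, fun a ha => ?_,
    fun k _ hk => ?_, ?_⟩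
  · rw [setIntegral_norm_le_gauss hd ha]
    exact (hasDerivAt_integral_chiCDF a).hasDerivWithinAt.congr hF (hF ha)
  · exact (hasDerivAt_chiCDF a).hasDerivWithinAt.congr hG (hG ha)
  · rw [hiter, iteratedDeriv_integral_chiCDF_zero_eq_zero hk]
  · rw [hiter]
    exact iteratedDeriv_succ_integral_chiCDF_zero_pos hd

end
end
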